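/- Let P be a nonempty Π⁰₁ closed subset of Cantor space 2^ℕ which is tree-immune, and let D ⊆ Ψ(T_P) be any computable closed subset of ℝ² which is a dendrite. Then D ∩ ([0,1]×{0}) = ∅. -/

import Mathlib

open Set Metric

section TopDefs

variable {α : Type*} [TopologicalSpace α]

/-- `A ⊆ α` is an arc with endpoints `x` and `y`:
a homeomorphic (continuous injective) image of `[0,1]` sending `0 ↦ x`, `1 ↦ y`. -/
def IsArc (A : Set α) (x y : α) : Prop :=
  ∃ f : Set.Icc (0:ℝ) 1 → α, Continuous f ∧ Function.Injective f ∧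
    Set.range f = A ∧ f ⟨0, by norm_num⟩ = x ∧ f ⟨1, by norm_num⟩ = y

/-- A continuum: a nonempty compact connected set. -/
def IsContinuum (X : Set α) : Prop := IsCompact X ∧ IsConnected X

/-- Any two distinct points of `X` are endpoints of an arc contained in `X`. -/
def ArcwiseConnectedSet (X : Set α) : Prop :=
  ∀ x ∈ X, ∀ y ∈ X, x ≠ y → ∃ A, A ⊆ X ∧ IsArc A x y

/-- `X` is unicoherent: for all closed connected `A, B ⊆ X` with `A ∪ B = X`,
the intersection `A ∩ B` is connected. -/
def UnicoherentSet (X : Set α) : Prop :=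
  ∀ A B : Set α, A ⊆ X → B ⊆ X → IsClosed A → IsClosed B →
    IsConnected A → IsConnected B → A ∪ B = X → IsConnected (A ∩ B)

/-- Every subcontinuum of `X` is unicoherent. -/
def HereditarilyUnicoherent (X : Set α) : Prop :=
  ∀ Y, Y ⊆ X → IsContinuum Y → UnicoherentSet Y

/-- A dendroid: an arcwise connected, hereditarily unicoherent continuum. -/
def IsDendroid (X : Set α) : Prop :=
  IsContinuum X ∧ ArcwiseConnectedSet X ∧ HereditarilyUnicoherent X

/-- The unit circle `S¹`. -/
def unitCircle : Set (EuclideanSpace ℝ (Fin 2)) := Metric.sphere 0 1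

/-- A dendrite: a locally connected continuum containing no subset homeomorphic to `S¹`. -/
def IsDendrite (X : Set α) : Prop :=
  IsContinuum X ∧ LocallyConnectedSpace ↥X ∧
    ∀ S : Set α, S ⊆ X → IsEmpty (↥S ≃ₜ ↥unitCircle)

/-- `x` and `y` lie in the same arc-component of `Y`. -/
def SameArcComponent (Y : Set α) (x y : α) : Prop :=
  x = y ∨ ∃ A, A ⊆ Y ∧ IsArc A x y

/-- `x` is a ramification point of `X`: `X \ {x}` has at least three arc-components. -/
def IsRamificationPoint (X : Set α) (x : α) : Prop :=
  x ∈ X ∧ ∃ u v w, u ∈ X \ {x} ∧ v ∈ X \ {x} ∧ w ∈ X \ {x} ∧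
    ¬ SameArcComponent (X \ {x}) u v ∧ ¬ SameArcComponent (X \ {x}) u w ∧
    ¬ SameArcComponent (X \ {x}) v w

/-- A tree (as a continuum): a dendrite with finitely many ramification points. -/
def IsTreeContinuum (X : Set α) : Prop :=
  IsDendrite X ∧ {x | IsRamificationPoint X x}.Finite

end TopDefs

section CompDefs

/-- The rational open ball in `ℝ²` coded by `((q₁, q₂), r)`. -/
def ballOfCode (c : (ℚ × ℚ) × ℚ) : Set (ℝ × ℝ) :=
  {x | dist x (((c.1.1 : ℝ), (c.1.2 : ℝ)) : ℝ × ℝ) < (c.2 : ℝ)}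

/-- A closed set `F ⊆ ℝ²` is `Π⁰₁` if it is the complement of the union of the rational
open balls coded by some c.e. set of codes. -/
def IsPi01Closed (F : Set (ℝ × ℝ)) : Prop :=
  ∃ W : (ℚ × ℚ) × ℚ → Prop, REPred W ∧ F = Set.univ \ ⋃ c ∈ {c | W c}, ballOfCode c

/-- `F ⊆ ℝ²` is c.e. closed if the set of codes of rational open balls meeting `F` is c.e. -/
def IsCEClosed (F : Set (ℝ × ℝ)) : Prop :=
  REPred (fun c : (ℚ × ℚ) × ℚ => (F ∩ ballOfCode c).Nonempty)

/-- A computable closed subset of `ℝ²`: both `Π⁰₁` and c.e. closed. -/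
def IsComputableClosed (F : Set (ℝ × ℝ)) : Prop :=
  IsPi01Closed F ∧ IsCEClosed F

/-- A point of `ℝ²` is computable if the set of codes of rational open balls
containing it is c.e. -/
def IsComputablePoint (x : ℝ × ℝ) : Prop :=
  REPred (fun c : (ℚ × ℚ) × ℚ => x ∈ ballOfCode c)

end CompDefs

section PsiDefs

/-- A tree of binary strings: a set of finite binary strings closed under prefixes. -/
def IsTreeOfStrings (T : Set (List Bool)) : Prop :=
  ∀ σ ∈ T, ∀ τ : List Bool, τ <+: σ → τ ∈ T

/-- The point `ψ(σ) ∈ ℝ²` associated with the binary string `σ`. -/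
noncomputable def psiPt (σ : List Bool) : ℝ × ℝ :=
  ((3:ℝ) ^ (-(σ.length : ℤ)) / 2 +
      2 * ∑ i ∈ Finset.range σ.length,
        (if σ.getD i false then (3:ℝ) ^ (-((i : ℤ) + 1)) else 0),
    (2:ℝ) ^ (-(σ.length : ℤ)))

/-- The planar embedding `Ψ(T)` of a tree `T` of binary strings: the closure of the union
of the segments from `ψ(σ⁻)` to `ψ(σ)` over nonempty `σ ∈ T` (together with the points
`ψ(σ)`, `σ ∈ T`, which makes no difference except for the degenerate trees `∅`, `{⟨⟩}`). -/
noncomputable def PsiSet (T : Set (List Bool)) : Set (ℝ × ℝ) :=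
  closure (psiPt '' T ∪ ⋃ σ ∈ T, ⋃ (_ : σ ≠ []), segment ℝ (psiPt σ.dropLast) (psiPt σ))

end PsiDefs

/-- The cylinder (basic clopen set) of Cantor space determined by a binary string. -/
def cylinder (σ : List Bool) : Set (ℕ → Bool) :=
  {a | ∀ i, i < σ.length → a i = σ.getD i false}

/-- The tree of a closed subset of Cantor space: the strings whose cylinder meets `F`. -/
def treeOfClosed (F : Set (ℕ → Bool)) : Set (List Bool) :=
  {σ | (F ∩ cylinder σ).Nonempty}

/-- `F ⊆ 2^ℕ` is `Π⁰₁` if its complement is the union of the cylinders over a c.e. set of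
binary strings. -/
def IsPi01Cantor (F : Set (ℕ → Bool)) : Prop :=
  ∃ W : List Bool → Prop, REPred W ∧ Fᶜ = ⋃ σ ∈ {σ | W σ}, cylinder σ

/-- `F` is tree-immune: no infinite tree of binary strings contained in `T_F` is computable. -/
def TreeImmune (F : Set (ℕ → Bool)) : Prop :=
  ∀ T : Set (List Bool), IsTreeOfStrings T → T ⊆ treeOfClosed F → T.Infinite →
    ¬ ComputablePred (fun σ => σ ∈ T)

/-!
Suppose `D ⊆ Ψ(T)` is computable and contains a point of height `0`. For a string `σ` let `x_σ` be
the projection of `ψ(σ)` to the line of height `0`. It is c.e. that `D` meets the open ball of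
radius `3^(-|σ|)` about `x_σ`, and, by effective compactness, it is c.e. that `D` misses the closed
ball of radius `(2/3) 3^(-|σ|)` about `x_σ`. One of the two always holds, so some computable set
`S` of strings consists of strings with the first property and contains all strings without the
second.

The columns of `Ψ(T)` over distinct strings of length `n` are so far apart that the open ball at `σ`
reaches `Ψ(T)` only if `σ ∈ T`; hence `S ⊆ T`. The open ball at a child of `σ` lies in the closed
ball at `σ`, so `S` is a tree. The point of `D` of height `0` lies in the closed ball at some
string of each length, so `S` is infinite.
-/

section REPred

open Encodable

variable {α β : Type*} [Primcodable α] [Primcodable β]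

theorem rePred_comp {p : β → Prop} (hp : REPred p) {f : α → β} (hf : Computable f) :
    REPred fun a => p (f a) :=
  Partrec.comp hp hf

theorem rePred_and {p q : α → Prop} (hp : REPred p) (hq : REPred q) :
    REPred fun a => p a ∧ q a := by
  have hq' : Partrec₂ fun (a : α) (_ : Unit) => Part.assert (q a) fun _ => Part.some () :=
    rePred_comp hq Computable.fst
  exact (Partrec.dom_re (Partrec.bind hp hq')).of_eq fun a => by simp [Part.assert]

theorem rePred_or {p q : α → Prop} (hp : REPred p) (hq : REPred q) :
    REPred fun a => p a ∨ q a := by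
  obtain ⟨k, hk, hkpq⟩ := Partrec.merge' hp hq
  exact (Partrec.dom_re hk).of_eq fun a => by simp [(hkpq a).2, Part.assert]

theorem exists_computable₂_of_rePred {p : α → Prop} (hp : REPred p) :
    ∃ g : α → ℕ → Bool, Computable₂ g ∧ ∀ a, p a ↔ ∃ n, g a n = true := by
  obtain ⟨c, hc⟩ := Nat.Partrec.Code.exists_code.1 hp
  have hdom : ∀ a, p a ↔ (c.eval (encode a)).Dom := fun a => by
    simp [hc, encodek, Part.assert]
  refine ⟨fun a n => (c.evaln n (encode a)).isSome, ?_, fun a => ?_⟩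
  · exact (Primrec.option_isSome.comp (Nat.Partrec.Code.primrec_evaln.comp
      ((Primrec.snd.pair (Primrec.const c)).pair (Primrec.encode.comp Primrec.fst)))).to_comp
  · simp only [hdom, Part.dom_iff_mem, Nat.Partrec.Code.evaln_complete,
      Option.isSome_iff_exists, Option.mem_def]
    exact exists_comm

/-- The search for a witness `b` is dovetailed with the enumeration of `p`. -/
theorem exists_partrec_uniformization {p : α → β → Prop}
    (hp : REPred fun x : α × β => p x.1 x.2) :
    ∃ f : α →. β, Partrec f ∧ (∀ a, ∀ b ∈ f a, p a b) ∧ ∀ a, (f a).Dom ↔ ∃ b, p a b := by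
  obtain ⟨g, hg, hpg⟩ := exists_computable₂_of_rePred hp
  let search (a : α) (n : ℕ) : Option β :=
    (decode (α := β) n.unpair.1).bind fun b => bif g (a, b) n.unpair.2 then some b else none
  have hsearch : Computable₂ search := by
    refine Computable.option_bind
      (Computable.decode.comp (Computable.fst.comp (Computable.unpair.comp Computable.snd))) ?_
    refine Computable.cond (hg.comp (Computable.pair (Computable.fst.comp Computable.fst)
      Computable.snd) (Computable.snd.comp (Computable.unpair.comp
      (Computable.snd.comp Computable.fst)))) ?_ (Computable.const none)
    exact Computable.option_some.comp Computable.snd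
  have mem_search : ∀ a b, (∃ n, b ∈ search a n) ↔ p a b := fun a b => by
    rw [hpg (a, b)]
    constructor
    · rintro ⟨n, hn⟩
      obtain ⟨b', -, hb'⟩ := Option.bind_eq_some_iff.1 hn
      cases hgn : g (a, b') n.unpair.2
      · simp [hgn] at hb'
      · obtain rfl : b' = b := by simpa [hgn] using hb'
        exact ⟨_, hgn⟩
    · rintro ⟨n, hn⟩
      exact ⟨Nat.pair (encode b) n, by simp [search, hn]⟩
  refine ⟨fun a => Nat.rfindOpt (search a), Partrec.rfindOpt hsearch, fun a b hb => ?_, fun a => ?_⟩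
  · exact (mem_search a b).1 (Nat.rfindOpt_spec hb)
  · simp only [Nat.rfindOpt_dom, ← mem_search]
    exact exists_comm

theorem rePred_exists {p : α → β → Prop} (hp : REPred fun x : α × β => p x.1 x.2) :
    REPred fun a => ∃ b, p a b := by
  obtain ⟨f, hf, -, hdom⟩ := exists_partrec_uniformization hp
  exact (Partrec.dom_re hf).of_eq hdom

theorem exists_computable_uniformization {p : α → β → Prop}
    (hp : REPred fun x : α × β => p x.1 x.2) (htotal : ∀ a, ∃ b, p a b) :
    ∃ f : α → β, Computable f ∧ ∀ a, p a (f a) := by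
  obtain ⟨f, hf, hfp, hdom⟩ := exists_partrec_uniformization hp
  have htot : ∀ a, (f a).Dom := fun a => (hdom a).2 (htotal a)
  exact ⟨fun a => (f a).get (htot a), hf.of_eq fun a => (Part.some_get (htot a)).symm,
    fun a => hfp a _ (Part.get_mem _)⟩

theorem exists_computable_separation {p q : α → Prop} (hp : REPred p) (hq : REPred q)
    (hpq : ∀ a, p a ∨ q a) :
    ∃ f : α → Bool, Computable f ∧ (∀ a, f a = true → p a) ∧ ∀ a, f a = false → q a := by
  have hbool : ∀ b₀ : Bool, REPred fun x : α × Bool => x.2 = b₀ := fun b₀ =>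
    (Primrec.eq.comp Primrec.snd (Primrec.const b₀)).computablePred.to_re
  obtain ⟨f, hf, hfpq⟩ := exists_computable_uniformization (α := α)
    (p := fun a b => (b = true ∧ p a) ∨ (b = false ∧ q a))
    (rePred_or (rePred_and (hbool true) (rePred_comp hp Computable.fst))
      (rePred_and (hbool false) (rePred_comp hq Computable.fst)))
    fun a => (hpq a).elim (fun h => ⟨true, .inl ⟨rfl, h⟩⟩) fun h => ⟨false, .inr ⟨rfl, h⟩⟩
  exact ⟨f, hf, fun a ha => by simpa [ha] using hfpq a, fun a ha => by simpa [ha] using hfpq a⟩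

theorem rePred_forall_lt {p : α → ℕ → Prop} (hp : REPred fun x : α × ℕ => p x.1 x.2)
    {k : α → ℕ} (hk : Computable k) : REPred fun a => ∀ i < k a, p a i := by
  let conj (a : α) (n : ℕ) : Part Unit :=
    n.rec (Part.some ()) fun i ih => ih.bind fun _ => Part.assert (p a i) fun _ => Part.some ()
  have hconj : Partrec fun a => conj a (k a) := by
    refine Partrec.nat_rec (h := fun a x => Part.assert (p a x.1) fun _ => Part.some ()) hk
      (Computable.const ()) ?_
    exact rePred_comp hp (Computable.pair Computable.fst (Computable.fst.comp Computable.snd))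
  have conj_dom : ∀ a n, (conj a n).Dom ↔ ∀ i < n, p a i := fun a n => by
    induction n with
    | zero => simp [conj]
    | succ n ih =>
      have hsucc : (conj a (n + 1)).Dom ↔ (conj a n).Dom ∧ p a n := by simp [conj, Part.assert]
      rw [hsucc, ih, Nat.forall_lt_succ_right]
  exact (Partrec.dom_re hconj).of_eq fun a => conj_dom a (k a)

end REPred

section RatComputability

open Encodable

theorem primrec₂_gcd : Primrec₂ Nat.gcd := by
  have hdvd : PrimrecRel fun (x : ℕ × ℕ) (d : ℕ) => d ∣ x.1 ∧ d ∣ x.2 := by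
    have hmod : ∀ {f : (ℕ × ℕ) × ℕ → ℕ}, Primrec f → PrimrecPred fun y => y.2 ∣ f y := fun hf =>
      (Primrec.eq.comp (Primrec.nat_mod.comp hf Primrec.snd) (Primrec.const 0)).of_eq
        fun _ => Nat.dvd_iff_mod_eq_zero.symm
    exact (hmod (Primrec.fst.comp Primrec.fst)).and (hmod (Primrec.snd.comp Primrec.fst))
  refine (Primrec.nat_findGreatest (Primrec.nat_add.comp Primrec.fst Primrec.snd) hdvd).of_eq ?_
  rintro ⟨a, b⟩
  rw [Nat.findGreatest_eq_iff]
  refine ⟨?_, fun _ => ⟨Nat.gcd_dvd_left a b, Nat.gcd_dvd_right a b⟩, ?_⟩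
  · rcases Nat.eq_zero_or_pos a with rfl | ha
    · simp
    · exact (Nat.gcd_le_left b ha).trans (Nat.le_add_right a b)
  · rintro d hlt hle ⟨hda, hdb⟩
    have hpos : 0 < Nat.gcd a b := Nat.gcd_pos_iff.2 (by omega)
    exact hlt.not_ge (Nat.le_of_dvd hpos (Nat.dvd_gcd hda hdb))

theorem intEquivNat_natCast (n : ℕ) : Equiv.intEquivNat n = 2 * n := rfl

theorem intEquivNat_neg_natCast (n : ℕ) : Equiv.intEquivNat (-n) = 2 * n - 1 := by
  cases n <;> rfl

theorem natAbs_intEquivNat_symm (k : ℕ) : (Equiv.intEquivNat.symm k).natAbs = (k + 1) / 2 := by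
  obtain ⟨z, rfl⟩ := Equiv.intEquivNat.surjective k
  rw [Equiv.symm_apply_apply]
  obtain ⟨n, rfl | rfl⟩ := z.eq_nat_or_neg
  · rw [intEquivNat_natCast]
    omega
  · rw [intEquivNat_neg_natCast]
    omega

/-- The code of a rational by its numerator and denominator. It is not the encoding underlying
`Primcodable ℚ`, which makes it surjective onto `ℕ` by skipping the unused codes. -/
def ratPairCode (q : ℚ) : ℕ := Nat.pair (Equiv.intEquivNat q.num) q.den

theorem mem_range_ratPairCode_iff (x : ℕ) :
    x ∈ range ratPairCode ↔ 0 < x.unpair.2 ∧ Nat.Coprime ((x.unpair.1 + 1) / 2) x.unpair.2 := by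
  rw [← natAbs_intEquivNat_symm]
  constructor
  · rintro ⟨q, rfl⟩
    simpa [ratPairCode, q.pos] using q.reduced
  · rintro ⟨hpos, hcop⟩
    exact ⟨⟨Equiv.intEquivNat.symm x.unpair.1, x.unpair.2, hpos.ne', hcop⟩, by simp [ratPairCode]⟩

theorem primrecPred_mem_range_ratPairCode : PrimrecPred fun x => x ∈ range ratPairCode := by
  have hfst : Primrec fun x : ℕ => x.unpair.1 := Primrec.fst.comp Primrec.unpair
  have hsnd : Primrec fun x : ℕ => x.unpair.2 := Primrec.snd.comp Primrec.unpair
  have hcop : PrimrecPred fun x : ℕ => Nat.Coprime ((x.unpair.1 + 1) / 2) x.unpair.2 :=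
    Primrec.eq.comp (primrec₂_gcd.comp (Primrec.nat_div.comp (Primrec.succ.comp hfst)
      (Primrec.const 2)) hsnd) (Primrec.const 1)
  exact ((Primrec.nat_lt.comp (Primrec.const 0) hsnd).and hcop).of_eq
    fun x => (mem_range_ratPairCode_iff x).symm

theorem encode_rat_eq_countP [DecidablePred (· ∈ range ratPairCode)] (q : ℚ) :
    encode (self := Primcodable.toEncodable) q =
      (List.range (ratPairCode q)).countP (· ∈ range ratPairCode) := by
  change (List.range (ratPairCode q)).countP (fun x =>
    @decide (x ∈ range ratPairCode) (@decidableRangeEncode ℚ Rat.instEncodable x)) = _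
  exact List.countP_congr fun x _ => Bool.eq_iff_iff.1 (decide_eq_decide.2 Iff.rfl)

theorem primrec_of_ratPairCode {α : Type*} [Primcodable α] {f : α → ℚ}
    (hf : Primrec fun a => ratPairCode (f a)) : Primrec f := by
  classical
  have hcount : Primrec fun n => (List.range n).countP (· ∈ range ratPairCode) := by
    simp only [List.countP_eq_length_filter]
    exact Primrec.list_length.comp
      ((Primrec.listFilter primrecPred_mem_range_ratPairCode).comp Primrec.list_range)
  exact Primrec.encode_iff.1 ((hcount.comp hf).of_eq fun a => (encode_rat_eq_countP (f a)).symm)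

/-- The rational `(a - b) / (d + 1)` presented by the natural numbers `((a, b), d)`. -/
def natFrac (v : (ℕ × ℕ) × ℕ) : ℚ := ((v.1.1 : ℚ) - v.1.2) / (v.2 + 1)

theorem natFrac_surjective : Function.Surjective natFrac := fun q => by
  refine ⟨((q.num.toNat, (-q.num).toNat), q.den - 1), ?_⟩
  have hnum : ((q.num.toNat : ℤ) : ℚ) - ((-q.num).toNat : ℤ) = q.num := by
    rw [← Int.cast_sub, Int.toNat_sub_toNat_neg]
  have hden : ((q.den - 1 : ℕ) : ℚ) + 1 = q.den := by
    rw [← Nat.cast_succ, Nat.succ_eq_add_one, Nat.sub_add_cancel q.pos]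
  rw [natFrac, hden]
  exact (congrArg (· / (q.den : ℚ)) hnum).trans q.num_div_den

theorem ratPairCode_natFrac (a b d : ℕ) :
    ratPairCode (natFrac ((a, b), d)) =
      let g := (d + 1).gcd ((a - b) + (b - a))
      Nat.pair (if b ≤ a then 2 * ((a - b) / g) else 2 * ((b - a) / g) - 1) ((d + 1) / g) := by
  have hmk : natFrac ((a, b), d) = mkRat ((a : ℤ) - b) (d + 1) := by
    rw [Rat.mkRat_eq_div, natFrac]
    push_cast
    rfl
  have habs : ((a : ℤ) - b).natAbs = (a - b) + (b - a) := by omega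
  rw [ratPairCode, hmk, Rat.num_mkRat, Rat.den_mkRat, if_neg d.succ_ne_zero,
    if_neg d.succ_ne_zero, habs]
  dsimp only
  congr 1
  split_ifs with hba
  · rw [← Nat.cast_sub hba, ← Int.natCast_ediv, intEquivNat_natCast]
  · have hab : a - b = 0 := by omega
    have hdvd : (((d + 1).gcd (a - b + (b - a)) : ℕ) : ℤ) ∣ ((b - a : ℕ) : ℤ) := by
      rw [hab, zero_add]
      exact_mod_cast Nat.gcd_dvd_right _ _
    rw [← neg_sub, ← Nat.cast_sub (by omega : a ≤ b), Int.neg_ediv_of_dvd hdvd,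
      ← Int.natCast_ediv, intEquivNat_neg_natCast]

theorem primrec_natFrac : Primrec natFrac := by
  have ha : Primrec fun v : (ℕ × ℕ) × ℕ => v.1.1 := Primrec.fst.comp Primrec.fst
  have hb : Primrec fun v : (ℕ × ℕ) × ℕ => v.1.2 := Primrec.snd.comp Primrec.fst
  have hd : Primrec fun v : (ℕ × ℕ) × ℕ => v.2 + 1 := Primrec.succ.comp Primrec.snd
  have hab := Primrec.nat_sub.comp ha hb
  have hba := Primrec.nat_sub.comp hb ha
  have hg := primrec₂_gcd.comp hd (Primrec.nat_add.comp hab hba)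
  have hpos := Primrec.nat_double.comp (Primrec.nat_div.comp hab hg)
  have hneg := Primrec.pred.comp (Primrec.nat_double.comp (Primrec.nat_div.comp hba hg))
  exact primrec_of_ratPairCode ((Primrec₂.natPair.comp
    (Primrec.ite (Primrec.nat_le.comp hb ha) hpos hneg) (Primrec.nat_div.comp hd hg)).of_eq
      fun _ => (ratPairCode_natFrac _ _ _).symm)

theorem exists_computable_rightInverse_natFrac :
    ∃ s : ℚ → (ℕ × ℕ) × ℕ, Computable s ∧ ∀ q, natFrac (s q) = q :=
  exists_computable_uniformization (Primrec.eq.comp (primrec_natFrac.comp Primrec.snd)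
    Primrec.fst).computablePred.to_re natFrac_surjective

section Arithmetic

variable {α : Type*} [Primcodable α]

theorem computable_nat_add {f g : α → ℕ} (hf : Computable f) (hg : Computable g) :
    Computable fun i => f i + g i :=
  Primrec.nat_add.to_comp.comp hf hg

theorem computable_nat_mul {f g : α → ℕ} (hf : Computable f) (hg : Computable g) :
    Computable fun i => f i * g i :=
  Primrec.nat_mul.to_comp.comp hf hg

variable {x y : α → ℚ}

theorem exists_computable_eq_natFrac (hx : Computable x) :
    ∃ a b d : α → ℕ, Computable a ∧ Computable b ∧ Computable d ∧
      ∀ i, x i = natFrac ((a i, b i), d i) := by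
  obtain ⟨s, hs, hsq⟩ := exists_computable_rightInverse_natFrac
  have hsx := hs.comp hx
  exact ⟨_, _, _, Computable.fst.comp (Computable.fst.comp hsx),
    Computable.snd.comp (Computable.fst.comp hsx), Computable.snd.comp hsx,
    fun i => (hsq (x i)).symm⟩

theorem computable_natFrac {a b d : α → ℕ} (ha : Computable a) (hb : Computable b)
    (hd : Computable d) : Computable fun i => natFrac ((a i, b i), d i) :=
  primrec_natFrac.to_comp.comp ((ha.pair hb).pair hd)

theorem computable_rat_add (hx : Computable x) (hy : Computable y) :
    Computable fun i => x i + y i := by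
  obtain ⟨a, b, d, ha, hb, hd, hx'⟩ := exists_computable_eq_natFrac hx
  obtain ⟨a', b', d', ha', hb', hd', hy'⟩ := exists_computable_eq_natFrac hy
  have hd₁ := Computable.succ.comp hd
  have hd₁' := Computable.succ.comp hd'
  refine (computable_natFrac
    (computable_nat_add (computable_nat_mul ha hd₁') (computable_nat_mul ha' hd₁))
    (computable_nat_add (computable_nat_mul hb hd₁') (computable_nat_mul hb' hd₁))
    (computable_nat_add (computable_nat_add (computable_nat_mul hd hd') hd) hd')).of_eq fun i => ?_
  simp only [hx', hy', natFrac]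
  push_cast
  field_simp
  ring

theorem computable_rat_mul (hx : Computable x) (hy : Computable y) :
    Computable fun i => x i * y i := by
  obtain ⟨a, b, d, ha, hb, hd, hx'⟩ := exists_computable_eq_natFrac hx
  obtain ⟨a', b', d', ha', hb', hd', hy'⟩ := exists_computable_eq_natFrac hy
  refine (computable_natFrac
    (computable_nat_add (computable_nat_mul ha ha') (computable_nat_mul hb hb'))
    (computable_nat_add (computable_nat_mul ha hb') (computable_nat_mul hb ha'))
    (computable_nat_add (computable_nat_add (computable_nat_mul hd hd') hd) hd')).of_eq fun i => ?_
  simp only [hx', hy', natFrac]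
  push_cast
  field_simp
  ring

theorem natFrac_lt_natFrac_iff {a b d a' b' d' : ℕ} :
    natFrac ((a, b), d) < natFrac ((a', b'), d') ↔
      a * (d' + 1) + b' * (d + 1) < a' * (d + 1) + b * (d' + 1) := by
  rw [natFrac, natFrac, div_lt_div_iff₀ (by positivity) (by positivity), ← Nat.cast_lt (α := ℚ)]
  push_cast
  constructor <;> intro h <;> linarith

theorem rePred_rat_lt (hx : Computable x) (hy : Computable y) : REPred fun i => x i < y i := by
  obtain ⟨a, b, d, ha, hb, hd, hx'⟩ := exists_computable_eq_natFrac hx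
  obtain ⟨a', b', d', ha', hb', hd', hy'⟩ := exists_computable_eq_natFrac hy
  have hd₁ := Computable.succ.comp hd
  have hd₁' := Computable.succ.comp hd'
  simp only [hx', hy', natFrac_lt_natFrac_iff]
  exact rePred_comp (Primrec.nat_lt : PrimrecRel ((· < ·) : ℕ → ℕ → Prop)).computablePred.to_re
    (Computable.pair
      (computable_nat_add (computable_nat_mul ha hd₁') (computable_nat_mul hb' hd₁))
      (computable_nat_add (computable_nat_mul ha' hd₁) (computable_nat_mul hb hd₁')))

end Arithmetic

end RatComputability

section EffectiveCompactness

theorem exists_pos_margin_of_isCompact {X ι : Type*} [PseudoMetricSpace X] {K : Set X}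
    (hK : IsCompact K) {x : ι → X} {r : ι → ℝ} (hcover : ∀ p ∈ K, ∃ i, dist p (x i) < r i) :
    ∃ ε > 0, ∀ p ∈ K, ∃ i, dist p (x i) + ε < r i := by
  let U (n : ℕ) : Set X := ⋃ i, {p | dist p (x i) + 1 / ((n : ℝ) + 1) < r i}
  have hopen : ∀ n, IsOpen (U n) := fun n =>
    isOpen_iUnion fun i => isOpen_lt (by fun_prop) continuous_const
  have hmono : Monotone U := fun n k hnk => iUnion_mono fun i p hp => by
    rw [mem_ofPred_eq] at hp ⊢
    linarith [Nat.one_div_le_one_div (α := ℝ) hnk]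
  have hKU : K ⊆ ⋃ n, U n := fun p hp => by
    obtain ⟨i, hi⟩ := hcover p hp
    obtain ⟨n, hn⟩ := exists_nat_one_div_lt (sub_pos.2 hi)
    exact mem_iUnion.2 ⟨n, mem_iUnion.2 ⟨i, lt_sub_iff_add_lt'.1 hn⟩⟩
  obtain ⟨n, hn⟩ := hK.elim_directed_cover U hopen hKU hmono.directed_le
  exact ⟨1 / ((n : ℝ) + 1), Nat.one_div_pos_of_nat, fun p hp => mem_iUnion.1 (hn hp)⟩

theorem exists_nat_abs_sub_le_of_abs_le {t r : ℝ} (ht : |t| ≤ r) (m : ℕ) :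
    ∃ i < m + 2, |t - r * ((2 * i - (m + 1)) / (m + 1))| ≤ r / (m + 1) := by
  have hN : (0 : ℝ) < m + 1 := by positivity
  rcases ((abs_nonneg t).trans ht).eq_or_lt with rfl | hr
  · exact ⟨0, by omega, by simpa using ht⟩
  obtain ⟨hlo, hhi⟩ := abs_le.1 ht
  obtain ⟨u, hu⟩ : ∃ u, t = r * ((2 * u - (m + 1)) / (m + 1)) :=
    ⟨(t / r + 1) * (m + 1) / 2, by field_simp; ring⟩
  have hu0 : 0 ≤ u := by
    rw [hu, ← mul_neg_one r, mul_le_mul_iff_right₀ hr, le_div_iff₀ hN] at hlo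
    linarith
  have huN : u ≤ m + 1 := by
    rw [hu, mul_le_iff_le_one_right hr, div_le_one hN] at hhi
    linarith
  have hfloor := Nat.floor_le (by linarith : (0 : ℝ) ≤ u + 1 / 2)
  have hfloor' := Nat.lt_floor_add_one (u + 1 / 2)
  refine ⟨⌊u + 1 / 2⌋₊, ?_, ?_⟩
  · exact_mod_cast (by push_cast; linarith : ((⌊u + 1 / 2⌋₊ : ℕ) : ℝ) < ((m + 2 : ℕ) : ℝ))
  · have hdiff : t - r * ((2 * ⌊u + 1 / 2⌋₊ - (m + 1)) / (m + 1)) =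
        r / (m + 1) * (2 * (u - ⌊u + 1 / 2⌋₊)) := by
      rw [hu]
      ring
    rw [hdiff, abs_mul, abs_of_pos (by positivity : 0 < r / ((m : ℝ) + 1))]
    exact mul_le_of_le_one_right (by positivity) (abs_le.2 ⟨by linarith, by linarith⟩)

/-- The closed counterpart of `ballOfCode`; it is empty for a negative radius. -/
def closedBallOfCode (c : (ℚ × ℚ) × ℚ) : Set (ℝ × ℝ) :=
  closedBall ((c.1.1 : ℝ), (c.1.2 : ℝ)) c.2

/-- The point with index `(i, j)` of the square grid of `(m + 2)²` rational points, with mesh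
`2 r / (m + 1)`, spanning the closed ball (a square, in the metric of `ℝ × ℝ`) with code `c`
and radius `r`. -/
def gridPoint (c : (ℚ × ℚ) × ℚ) (m i j : ℕ) : ℚ × ℚ :=
  (c.1.1 + c.2 * natFrac ((2 * i, m + 1), m), c.1.2 + c.2 * natFrac ((2 * j, m + 1), m))

/-- The open ball with code `c'` shrunk by the mesh radius of the `m`-th grid of `c`. -/
def shrinkCode (c c' : (ℚ × ℚ) × ℚ) (m : ℕ) : (ℚ × ℚ) × ℚ :=
  (c'.1, c'.2 + c.2 * natFrac ((0, 1), m))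

theorem exists_dist_gridPoint_le {c : (ℚ × ℚ) × ℚ} {p : ℝ × ℝ} (hp : p ∈ closedBallOfCode c)
    (m : ℕ) : ∃ i < m + 2, ∃ j < m + 2,
      dist p (Prod.map (↑) (↑) (gridPoint c m i j)) ≤ c.2 / (m + 1) := by
  rw [closedBallOfCode, mem_closedBall, Prod.dist_eq, max_le_iff, Real.dist_eq,
    Real.dist_eq] at hp
  obtain ⟨i, hi, hpi⟩ := exists_nat_abs_sub_le_of_abs_le hp.1 m
  obtain ⟨j, hj, hpj⟩ := exists_nat_abs_sub_le_of_abs_le hp.2 m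
  refine ⟨i, hi, j, hj, ?_⟩
  rw [Prod.dist_eq, max_le_iff, Real.dist_eq, Real.dist_eq]
  simp only [gridPoint, natFrac, Prod.map]
  push_cast
  simpa only [sub_sub] using And.intro hpi hpj

theorem gridPoint_mem_closedBallOfCode {c : (ℚ × ℚ) × ℚ} (hc : 0 ≤ c.2) {m i j : ℕ}
    (hi : i < m + 2) (hj : j < m + 2) :
    Prod.map (↑) (↑) (gridPoint c m i j) ∈ closedBallOfCode c := by
  have hcoeff : ∀ k < m + 2, |(natFrac ((2 * k, m + 1), m) : ℝ)| ≤ 1 := fun k hk => by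
    have hk' : (k : ℝ) ≤ m + 1 := by exact_mod_cast Nat.lt_succ_iff.1 hk
    simp only [natFrac]
    push_cast
    rw [abs_div, abs_of_pos (by positivity : (0 : ℝ) < m + 1), div_le_one (by positivity)]
    exact abs_le.2 ⟨by linarith [k.cast_nonneg (α := ℝ)], by linarith⟩
  have hc' : (0 : ℝ) ≤ c.2 := by exact_mod_cast hc
  rw [closedBallOfCode, mem_closedBall, Prod.dist_eq, max_le_iff, Real.dist_eq, Real.dist_eq]
  simp only [gridPoint, Prod.map, Rat.cast_add, Rat.cast_mul, add_sub_cancel_left, abs_mul,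
    abs_of_nonneg hc']
  exact ⟨mul_le_of_le_one_right hc' (hcoeff i hi), mul_le_of_le_one_right hc' (hcoeff j hj)⟩

theorem mem_ballOfCode_shrinkCode_iff {c c' : (ℚ × ℚ) × ℚ} {m : ℕ} {p : ℝ × ℝ} :
    p ∈ ballOfCode (shrinkCode c c' m) ↔
      dist p ((c'.1.1 : ℝ), (c'.1.2 : ℝ)) + c.2 / (m + 1) < c'.2 := by
  rw [ballOfCode, mem_ofPred_eq, shrinkCode, natFrac]
  push_cast
  rw [← lt_sub_iff_add_lt]
  ring_nf

/-- By compactness the cover survives shrinking every ball by some fixed `ε`, so it is detected at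
the grid points as soon as the mesh radius is below `ε`. -/
theorem closedBallOfCode_subset_iff {W : (ℚ × ℚ) × ℚ → Prop} {c : (ℚ × ℚ) × ℚ} :
    closedBallOfCode c ⊆ ⋃ c' ∈ {c' | W c'}, ballOfCode c' ↔
      c.2 < 0 ∨ ∃ m : ℕ, ∀ i < m + 2, ∀ j < m + 2, ∃ c', W c' ∧
        Prod.map (↑) (↑) (gridPoint c m i j) ∈ ballOfCode (shrinkCode c c' m) := by
  simp only [mem_ballOfCode_shrinkCode_iff]
  constructor
  · intro hcover
    rw [or_iff_not_imp_left, not_lt]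
    intro hc
    obtain ⟨ε, hε, hmargin⟩ := exists_pos_margin_of_isCompact
      (x := fun c' : {c' // W c'} => ((c'.1.1.1 : ℝ), (c'.1.1.2 : ℝ))) (r := fun c' => (c'.1.2 : ℝ))
      (isCompact_closedBall _ _ : IsCompact (closedBallOfCode c)) fun p hp => by
        obtain ⟨c', hW, hpc'⟩ := mem_iUnion₂.1 (hcover hp)
        exact ⟨⟨c', hW⟩, hpc'⟩
    obtain ⟨m, hm⟩ := exists_nat_gt ((c.2 : ℝ) / ε)
    have hmesh : (c.2 : ℝ) / (m + 1) ≤ ε := by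
      rw [div_lt_iff₀ hε] at hm
      rw [div_le_iff₀ (by positivity)]
      linarith
    refine ⟨m, fun i hi j hj => ?_⟩
    obtain ⟨⟨c', hW⟩, hc'⟩ := hmargin _ (gridPoint_mem_closedBallOfCode hc hi hj)
    exact ⟨c', hW, by linarith⟩
  · rintro (hc | ⟨m, hm⟩) p hp
    · have : (c.2 : ℝ) < 0 := by exact_mod_cast hc
      exact absurd (mem_closedBall.1 hp) (this.trans_le dist_nonneg).not_ge
    · obtain ⟨i, hi, j, hj, hdist⟩ := exists_dist_gridPoint_le hp m
      obtain ⟨c', hW, hc'⟩ := hm i hi j hj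
      refine mem_iUnion₂.2 ⟨c', hW, ?_⟩
      exact (dist_triangle _ _ _).trans_lt (by linarith)

section CodeComputability

variable {α : Type*} [Primcodable α]

theorem computable_gridPoint {c : α → (ℚ × ℚ) × ℚ} {m i j : α → ℕ} (hc : Computable c)
    (hm : Computable m) (hi : Computable i) (hj : Computable j) :
    Computable fun a => gridPoint (c a) (m a) (i a) (j a) := by
  have hcenter := Computable.fst.comp hc
  have hcoeff : ∀ {k : α → ℕ}, Computable k →
      Computable fun a => (c a).2 * natFrac ((2 * k a, m a + 1), m a) := fun hk =>
    computable_rat_mul (Computable.snd.comp hc) (computable_natFrac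
      (computable_nat_mul (Computable.const 2) hk) (Computable.succ.comp hm) hm)
  exact (computable_rat_add (Computable.fst.comp hcenter) (hcoeff hi)).pair
    (computable_rat_add (Computable.snd.comp hcenter) (hcoeff hj))

theorem computable_shrinkCode {c c' : α → (ℚ × ℚ) × ℚ} {m : α → ℕ} (hc : Computable c)
    (hc' : Computable c') (hm : Computable m) :
    Computable fun a => shrinkCode (c a) (c' a) (m a) :=
  (Computable.fst.comp hc').pair (computable_rat_add (Computable.snd.comp hc')
    (computable_rat_mul (Computable.snd.comp hc)
      (computable_natFrac (Computable.const 0) (Computable.const 1) hm)))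

theorem ratCast_mem_ballOfCode_iff (q : ℚ × ℚ) (c : (ℚ × ℚ) × ℚ) :
    Prod.map (↑) (↑) q ∈ ballOfCode c ↔
      (q.1 < c.1.1 + c.2 ∧ c.1.1 < q.1 + c.2) ∧ q.2 < c.1.2 + c.2 ∧ c.1.2 < q.2 + c.2 := by
  rw [ballOfCode, mem_ofPred_eq, Prod.dist_eq, max_lt_iff, Real.dist_eq, Real.dist_eq,
    abs_sub_lt_iff, abs_sub_lt_iff]
  simp only [sub_lt_iff_lt_add, Prod.map]
  norm_cast
  simp only [add_comm]

theorem rePred_ratCast_mem_ballOfCode {q : α → ℚ × ℚ} {c : α → (ℚ × ℚ) × ℚ}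
    (hq : Computable q) (hc : Computable c) :
    REPred fun a => Prod.map (↑) (↑) (q a) ∈ ballOfCode (c a) := by
  have hq₁ := Computable.fst.comp hq
  have hq₂ := Computable.snd.comp hq
  have hc₁ := Computable.fst.comp (Computable.fst.comp hc)
  have hc₂ := Computable.snd.comp (Computable.fst.comp hc)
  have hr := Computable.snd.comp hc
  simp only [ratCast_mem_ballOfCode_iff]
  exact rePred_and
    (rePred_and (rePred_rat_lt hq₁ (computable_rat_add hc₁ hr))
      (rePred_rat_lt hc₁ (computable_rat_add hq₁ hr)))
    (rePred_and (rePred_rat_lt hq₂ (computable_rat_add hc₂ hr))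
      (rePred_rat_lt hc₂ (computable_rat_add hq₂ hr)))

theorem rePred_exists_forall_lt_forall_lt {p : α → ℕ → ℕ → ℕ → Prop}
    (hp : REPred fun z : ((α × ℕ) × ℕ) × ℕ => p z.1.1.1 z.1.1.2 z.1.2 z.2) :
    REPred fun a => ∃ m : ℕ, ∀ i < m + 2, ∀ j < m + 2, p a m i j := by
  have hsize : Computable fun z : α × ℕ => z.2 + 2 :=
    computable_nat_add Computable.snd (Computable.const 2)
  refine rePred_exists (rePred_forall_lt ?_ hsize)
  exact rePred_forall_lt hp (hsize.comp Computable.fst)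

end CodeComputability

theorem rePred_exists_grid_shrinkCode {W : (ℚ × ℚ) × ℚ → Prop} (hW : REPred W) :
    REPred fun c : (ℚ × ℚ) × ℚ => ∃ m : ℕ, ∀ i < m + 2, ∀ j < m + 2, ∃ c', W c' ∧
      Prod.map (↑) (↑) (gridPoint c m i j) ∈ ballOfCode (shrinkCode c c' m) := by
  have hc : Computable fun z : ((((ℚ × ℚ) × ℚ) × ℕ) × ℕ) × ℕ => z.1.1.1 :=
    Computable.fst.comp (Computable.fst.comp Computable.fst)
  have hm : Computable fun z : ((((ℚ × ℚ) × ℚ) × ℕ) × ℕ) × ℕ => z.1.1.2 :=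
    Computable.snd.comp (Computable.fst.comp Computable.fst)
  have hgrid := computable_gridPoint hc hm (Computable.snd.comp Computable.fst) Computable.snd
  exact rePred_exists_forall_lt_forall_lt (rePred_exists (rePred_and
    (rePred_comp hW Computable.snd) (rePred_ratCast_mem_ballOfCode (hgrid.comp Computable.fst)
      (computable_shrinkCode (hc.comp Computable.fst) Computable.snd (hm.comp Computable.fst)))))

theorem IsPi01Closed.rePred_disjoint_closedBallOfCode {D : Set (ℝ × ℝ)} (hD : IsPi01Closed D) :
    REPred fun c => Disjoint D (closedBallOfCode c) := by
  obtain ⟨W, hW, rfl⟩ := hD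
  have hiff : ∀ c, Disjoint (univ \ ⋃ c' ∈ {c' | W c'}, ballOfCode c') (closedBallOfCode c) ↔
      closedBallOfCode c ⊆ ⋃ c' ∈ {c' | W c'}, ballOfCode c' := fun c => by
    rw [← compl_eq_univ_sdiff, disjoint_compl_left_iff_subset]
  simp only [hiff, closedBallOfCode_subset_iff]
  exact rePred_or (rePred_rat_lt Computable.snd (Computable.const 0))
    (rePred_exists_grid_shrinkCode hW)

end EffectiveCompactness

section PsiGeometry

/-- The natural number whose ternary digits are obtained from `σ` by doubling every bit, so that
`(ternaryValue σ + 1/2) / 3 ^ |σ|` is the abscissa of `ψ(σ)`. -/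
def ternaryValue (σ : List Bool) : ℕ := σ.foldl (fun a b => 3 * a + if b then 2 else 0) 0

theorem ternaryValue_append_singleton (σ : List Bool) (b : Bool) :
    ternaryValue (σ ++ [b]) = 3 * ternaryValue σ + if b then 2 else 0 := by
  simp [ternaryValue]

theorem psiPt_snd (σ : List Bool) : (psiPt σ).2 = (1 / 2 : ℝ) ^ σ.length := by
  simp [psiPt]

theorem psiPt_append_singleton_fst (σ : List Bool) (b : Bool) :
    (psiPt (σ ++ [b])).1 =
      (psiPt σ).1 + (if b then 1 else -1) * (1 / 3 : ℝ) ^ (σ.length + 1) := by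
  have hsum : ∑ i ∈ Finset.range σ.length,
      (if (σ ++ [b]).getD i false then (3 : ℝ) ^ (-((i : ℤ) + 1)) else 0) =
      ∑ i ∈ Finset.range σ.length,
        (if σ.getD i false then (3 : ℝ) ^ (-((i : ℤ) + 1)) else 0) :=
    Finset.sum_congr rfl fun i hi => by rw [List.getD_append _ _ _ _ (Finset.mem_range.1 hi)]
  have hlast : (σ ++ [b]).getD σ.length false = b := by simp
  have hzpow : ∀ k : ℕ, (3 : ℝ) ^ (-(k : ℤ)) = (1 / 3 : ℝ) ^ k := by simp
  simp only [psiPt, List.length_append, List.length_singleton, Finset.sum_range_succ, hsum, hlast]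
  rw [← Nat.cast_succ, hzpow, hzpow, pow_succ]
  cases b <;> simp <;> ring

theorem psiPt_fst (σ : List Bool) :
    (psiPt σ).1 = (ternaryValue σ + 1 / 2) * (1 / 3 : ℝ) ^ σ.length := by
  induction σ using List.reverseRecOn with
  | nil => simp [psiPt, ternaryValue]
  | append_singleton σ b ih =>
    rw [psiPt_append_singleton_fst, ih, ternaryValue_append_singleton]
    simp only [List.length_append, List.length_singleton, pow_succ]
    cases b <;> simp <;> ring

theorem ternaryValue_gap {σ τ : List Bool} (hlen : σ.length = τ.length) (hne : σ ≠ τ) :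
    ternaryValue σ + 2 ≤ ternaryValue τ ∨ ternaryValue τ + 2 ≤ ternaryValue σ := by
  induction σ using List.reverseRecOn generalizing τ with
  | nil => exact absurd (List.length_eq_zero_iff.1 hlen.symm).symm hne
  | append_singleton σ b ih =>
    obtain rfl | ⟨τ, c, rfl⟩ := List.eq_nil_or_concat' τ
    · simp at hlen
    have hlen' : σ.length = τ.length := by simpa using hlen
    rw [ternaryValue_append_singleton, ternaryValue_append_singleton]
    by_cases hστ : σ = τ
    · have hbc : b ≠ c := fun hbc => hne (by rw [hστ, hbc])
      subst hστ
      cases b <;> cases c <;> simp at hbc ⊢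
    · have := ih hlen' hστ
      split_ifs <;> omega

theorem eq_of_abs_psiPt_fst_sub_lt {σ τ : List Bool} (hlen : σ.length = τ.length)
    (hlt : |(psiPt σ).1 - (psiPt τ).1| < 2 * (1 / 3 : ℝ) ^ σ.length) : σ = τ := by
  by_contra hne
  have hpow : (0 : ℝ) < (1 / 3 : ℝ) ^ σ.length := by positivity
  rw [psiPt_fst, psiPt_fst, ← hlen, ← sub_mul, abs_mul, abs_of_pos hpow,
    mul_lt_mul_iff_left₀ hpow, add_sub_add_right_eq_sub, abs_lt] at hlt
  rcases ternaryValue_gap hlen hne with h | h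
  · have : (ternaryValue σ + 2 : ℝ) ≤ ternaryValue τ := by exact_mod_cast h
    linarith
  · have : (ternaryValue τ + 2 : ℝ) ≤ ternaryValue σ := by exact_mod_cast h
    linarith

theorem abs_psiPt_append_fst_sub_le (σ ρ : List Bool) :
    |(psiPt (σ ++ ρ)).1 - (psiPt σ).1| ≤
      ((1 / 3 : ℝ) ^ σ.length - (1 / 3 : ℝ) ^ (σ ++ ρ).length) / 2 := by
  induction ρ using List.reverseRecOn with
  | nil => simp
  | append_singleton ρ b ih =>
    have hlen : (σ ++ ρ ++ [b]).length = (σ ++ ρ).length + 1 := List.length_append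
    rw [← List.append_assoc, psiPt_append_singleton_fst, hlen, pow_succ]
    have hpow : (0 : ℝ) < (1 / 3) ^ (σ ++ ρ).length := by positivity
    rw [abs_le] at ih ⊢
    cases b <;> simp only [if_true, if_false, Bool.false_eq_true] <;>
      constructor <;> linarith [ih.1, ih.2]

/-- The closed vertical strip containing `ψ(τ)` for every extension `τ` of `σ`. -/
def column (σ : List Bool) : Set (ℝ × ℝ) :=
  {p | |p.1 - (psiPt σ).1| ≤ (1 / 3 : ℝ) ^ σ.length / 2}

theorem isClosed_column (σ : List Bool) : IsClosed (column σ) :=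
  isClosed_le (by fun_prop) continuous_const

theorem convex_column (σ : List Bool) : Convex ℝ (column σ) :=
  (convex_closedBall (psiPt σ).1 ((1 / 3 : ℝ) ^ σ.length / 2)).linear_preimage
    (LinearMap.fst ℝ ℝ ℝ)

theorem psiPt_mem_column {σ τ : List Bool} (hστ : σ <+: τ) : psiPt τ ∈ column σ := by
  obtain ⟨ρ, rfl⟩ := hστ
  have hpow : (0 : ℝ) < (1 / 3 : ℝ) ^ (σ ++ ρ).length := by positivity
  exact (abs_psiPt_append_fst_sub_le σ ρ).trans (by linarith)

theorem le_psiPt_snd {σ : List Bool} {n : ℕ} (hn : σ.length ≤ n) :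
    (1 / 2 : ℝ) ^ n ≤ (psiPt σ).2 := by
  rw [psiPt_snd]
  exact pow_le_pow_of_le_one (by norm_num) (by norm_num) hn

theorem segment_psiPt_subset (σ : List Bool) (b : Bool) (n : ℕ) :
    segment ℝ (psiPt σ) (psiPt (σ ++ [b])) ⊆ {p | (1 / 2 : ℝ) ^ n ≤ p.2} ∨
      n ≤ σ.length ∧ segment ℝ (psiPt σ) (psiPt (σ ++ [b])) ⊆ column (σ.take n) := by
  rcases lt_or_ge σ.length n with hn | hn
  · have hconv : Convex ℝ {p : ℝ × ℝ | (1 / 2 : ℝ) ^ n ≤ p.2} :=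
      convex_halfSpace_ge (LinearMap.snd ℝ ℝ ℝ).isLinear _
    exact .inl (hconv.segment_subset (le_psiPt_snd hn.le) (le_psiPt_snd (by simpa using hn)))
  · have htake : σ.take n <+: σ := List.take_prefix n σ
    exact .inr ⟨hn, (convex_column _).segment_subset (psiPt_mem_column htake)
      (psiPt_mem_column (htake.trans (List.prefix_append σ [b])))⟩

theorem exists_mem_column_of_mem_psiSet {T : Set (List Bool)} (hT : IsTreeOfStrings T) {n : ℕ}
    {p : ℝ × ℝ} (hp : p ∈ PsiSet T) (hpn : p.2 < (1 / 2 : ℝ) ^ n) :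
    ∃ σ ∈ T, σ.length = n ∧ p ∈ column σ := by
  let F : Set (ℝ × ℝ) :=
    {p | (1 / 2 : ℝ) ^ n ≤ p.2} ∪ ⋃ σ ∈ {σ : List Bool | σ.length = n} ∩ T, column σ
  have hF : IsClosed F := (isClosed_le continuous_const continuous_snd).union
    (((List.finite_length_eq Bool n).inter_of_left T).isClosed_biUnion fun σ _ => isClosed_column σ)
  have column_subset : ∀ τ ∈ T, n ≤ τ.length → column (τ.take n) ⊆ F := fun τ hτ hn => by
    have hmem : τ.take n ∈ {σ : List Bool | σ.length = n} ∩ T :=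
      ⟨List.length_take_of_le hn, hT τ hτ _ (List.take_prefix n τ)⟩
    exact subset_union_of_subset_right (subset_biUnion_of_mem (u := column) hmem) _
  have hvertices : psiPt '' T ⊆ F := by
    rintro _ ⟨τ, hτ, rfl⟩
    rcases le_total τ.length n with hn | hn
    · exact .inl (le_psiPt_snd hn)
    · exact column_subset τ hτ hn (psiPt_mem_column (List.take_prefix n τ))
  have hedges : ⋃ σ ∈ T, ⋃ (_ : σ ≠ []), segment ℝ (psiPt σ.dropLast) (psiPt σ) ⊆ F := by
    refine iUnion₂_subset fun τ hτ => iUnion_subset fun hne => ?_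
    obtain rfl | ⟨σ, b, rfl⟩ := List.eq_nil_or_concat' τ
    · exact absurd rfl hne
    rw [List.dropLast_concat]
    rcases segment_psiPt_subset σ b n with hhigh | ⟨hn, hcol⟩
    · exact subset_union_of_subset_left hhigh _
    · exact hcol.trans (column_subset σ (hT _ hτ σ (List.prefix_append σ [b])) hn)
  rcases closure_minimal (union_subset hvertices hedges) hF hp with hhigh | hcol
  · exact absurd hpn (not_lt.2 hhigh)
  · obtain ⟨σ, ⟨hlen, hσ⟩, hpσ⟩ := mem_iUnion₂.1 hcol
    exact ⟨σ, hσ, hlen, hpσ⟩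

end PsiGeometry

section BaseBalls

/-- The code of the ball of radius `r * 3 ^ (-|σ|)` about the projection of `ψ(σ)` to the line
of height `0`. -/
def baseCode (r : ℚ) (σ : List Bool) : (ℚ × ℚ) × ℚ :=
  (((ternaryValue σ + 1 / 2) * (1 / 3) ^ σ.length, 0), r * (1 / 3) ^ σ.length)

theorem ballOfCode_baseCode (r : ℚ) (σ : List Bool) :
    ballOfCode (baseCode r σ) = ball ((psiPt σ).1, 0) (r * (1 / 3) ^ σ.length) := by
  simp only [ballOfCode, baseCode, psiPt_fst]
  push_cast
  rfl

theorem closedBallOfCode_baseCode (r : ℚ) (σ : List Bool) :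
    closedBallOfCode (baseCode r σ) = closedBall ((psiPt σ).1, 0) (r * (1 / 3) ^ σ.length) := by
  simp only [closedBallOfCode, baseCode, psiPt_fst]
  push_cast
  rfl

theorem computable_ternaryValue : Computable ternaryValue := by
  have hdigit : Primrec fun b : Bool => if b then 2 else 0 := Primrec.dom_finite _
  have hstep : Primrec₂ fun (_ : List Bool) (v : ℕ × Bool) => 3 * v.1 + if v.2 then 2 else 0 :=
    Primrec.nat_add.comp (Primrec.nat_mul.comp (Primrec.const 3) (Primrec.fst.comp Primrec.snd))
      (hdigit.comp (Primrec.snd.comp Primrec.snd))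
  exact (Primrec.list_foldl Primrec.id (Primrec.const 0) hstep).to_comp

theorem computable_one_third_pow_length :
    Computable fun σ : List Bool => (1 / 3 : ℚ) ^ σ.length := by
  have hpow : Primrec fun σ : List Bool => 3 ^ σ.length :=
    (Primrec₂.unpaired'.1 Nat.Primrec.pow).comp (Primrec.const 3) Primrec.list_length
  refine (computable_natFrac (Computable.const 1) (Computable.const 0)
    (Computable.pred.comp hpow.to_comp)).of_eq fun σ => ?_
  simp [natFrac, Nat.pred_eq_sub_one]

theorem computable_baseCode (r : ℚ) : Computable (baseCode r) := by
  have hvalue : Computable fun σ => (ternaryValue σ : ℚ) :=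
    (computable_natFrac computable_ternaryValue (Computable.const 0) (Computable.const 0)).of_eq
      fun σ => by simp [natFrac]
  have hpow := computable_one_third_pow_length
  exact ((computable_rat_mul (computable_rat_add hvalue (Computable.const _)) hpow).pair
    (Computable.const 0)).pair (computable_rat_mul (Computable.const r) hpow)

theorem ballOfCode_baseCode_append_singleton_subset (σ : List Bool) (b : Bool) :
    ballOfCode (baseCode 1 (σ ++ [b])) ⊆ closedBallOfCode (baseCode (2 / 3) σ) := by
  rw [ballOfCode_baseCode, closedBallOfCode_baseCode]
  refine ball_subset_closedBall.trans (closedBall_subset_closedBall' ?_)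
  have hdist : dist ((psiPt (σ ++ [b])).1, (0 : ℝ)) ((psiPt σ).1, 0) =
      (1 / 3) ^ (σ.length + 1) := by
    rw [Prod.dist_eq, dist_self, Real.dist_eq, psiPt_append_singleton_fst, add_sub_cancel_left,
      max_eq_left (abs_nonneg _)]
    cases b <;> simp
  rw [hdist, List.length_append, List.length_singleton, pow_succ]
  push_cast
  linarith

theorem closedBallOfCode_baseCode_subset (σ : List Bool) :
    closedBallOfCode (baseCode (2 / 3) σ) ⊆ ballOfCode (baseCode 1 σ) := by
  rw [ballOfCode_baseCode, closedBallOfCode_baseCode]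
  refine closedBall_subset_ball ?_
  have hpow : (0 : ℝ) < (1 / 3) ^ σ.length := by positivity
  push_cast
  linarith

theorem mem_of_mem_psiSet_of_mem_ballOfCode_baseCode {T : Set (List Bool)}
    (hT : IsTreeOfStrings T) {p : ℝ × ℝ} (hp : p ∈ PsiSet T) {σ : List Bool}
    (hpσ : p ∈ ballOfCode (baseCode 1 σ)) : σ ∈ T := by
  rw [ballOfCode_baseCode, mem_ball, Prod.dist_eq, max_lt_iff, Real.dist_eq, Real.dist_eq,
    Rat.cast_one, one_mul, sub_zero] at hpσ
  have hheight : p.2 < (1 / 2 : ℝ) ^ σ.length := calc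
    p.2 ≤ |p.2| := le_abs_self _
    _ < (1 / 3) ^ σ.length := hpσ.2
    _ ≤ (1 / 2) ^ σ.length := pow_le_pow_left₀ (by norm_num) (by norm_num) _
  obtain ⟨τ, hτ, hlen, hpτ⟩ := exists_mem_column_of_mem_psiSet hT hp hheight
  rw [column, mem_ofPred_eq, hlen] at hpτ
  have hpow : (0 : ℝ) < (1 / 3) ^ σ.length := by positivity
  have hclose : |(psiPt σ).1 - (psiPt τ).1| < 2 * (1 / 3 : ℝ) ^ σ.length := calc
    _ ≤ |(psiPt σ).1 - p.1| + |p.1 - (psiPt τ).1| := abs_sub_le _ _ _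
    _ < 2 * (1 / 3 : ℝ) ^ σ.length := by linarith [abs_sub_comm (psiPt σ).1 p.1, hpσ.1]
  rwa [eq_of_abs_psiPt_fst_sub_lt hlen.symm hclose]

theorem exists_mem_closedBallOfCode_baseCode {T : Set (List Bool)} (hT : IsTreeOfStrings T)
    {p : ℝ × ℝ} (hp : p ∈ PsiSet T) (hp0 : p.2 = 0) (n : ℕ) :
    ∃ σ : List Bool, σ.length = n ∧ p ∈ closedBallOfCode (baseCode (2 / 3) σ) := by
  obtain ⟨σ, -, hlen, hpσ⟩ := exists_mem_column_of_mem_psiSet hT hp (n := n) (by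
    rw [hp0]
    positivity)
  refine ⟨σ, hlen, ?_⟩
  have hpow : (0 : ℝ) < (1 / 3) ^ σ.length := by positivity
  rw [closedBallOfCode_baseCode, mem_closedBall, Prod.dist_eq, hp0, dist_self, Real.dist_eq,
    max_eq_left (abs_nonneg _)]
  refine hpσ.trans ?_
  push_cast
  linarith

end BaseBalls

section Trees

theorem isTreeOfStrings_of_append_singleton {S : Set (List Bool)}
    (hS : ∀ σ b, σ ++ [b] ∈ S → σ ∈ S) : IsTreeOfStrings S := by
  rintro _ hσ τ ⟨ρ, rfl⟩
  induction ρ using List.reverseRecOn with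
  | nil => simpa using hσ
  | append_singleton ρ b ih => exact ih (hS _ b (by rwa [List.append_assoc]))

theorem infinite_of_forall_exists_length_eq {α : Type*} {S : Set (List α)}
    (hS : ∀ n, ∃ σ ∈ S, σ.length = n) : S.Infinite :=
  Set.Infinite.of_image List.length (by
    rw [eq_univ_of_forall (s := List.length '' S) hS]
    exact infinite_univ)

theorem isTreeOfStrings_treeOfClosed (F : Set (ℕ → Bool)) : IsTreeOfStrings (treeOfClosed F) := by
  rintro _ ⟨a, ha, hcyl⟩ τ ⟨ρ, rfl⟩
  refine ⟨a, ha, fun i hi => ?_⟩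
  rw [hcyl i (by rw [List.length_append]; omega), List.getD_append _ _ _ _ hi]

end Trees

theorem exists_infinite_computable_subtree {T : Set (List Bool)} (hT : IsTreeOfStrings T)
    {D : Set (ℝ × ℝ)} (hsub : D ⊆ PsiSet T) (hcomp : IsComputableClosed D) {q : ℝ × ℝ}
    (hq : q ∈ D) (hq0 : q.2 = 0) :
    ∃ S, IsTreeOfStrings S ∧ S ⊆ T ∧ S.Infinite ∧ ComputablePred fun σ => σ ∈ S := by
  have hmeets : REPred fun σ => (D ∩ ballOfCode (baseCode 1 σ)).Nonempty :=
    rePred_comp hcomp.2 (computable_baseCode 1)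
  have hmisses : REPred fun σ => Disjoint D (closedBallOfCode (baseCode (2 / 3) σ)) :=
    rePred_comp hcomp.1.rePred_disjoint_closedBallOfCode (computable_baseCode (2 / 3))
  have hcases : ∀ σ, (D ∩ ballOfCode (baseCode 1 σ)).Nonempty ∨
      Disjoint D (closedBallOfCode (baseCode (2 / 3) σ)) := fun σ => by
    rw [or_iff_not_imp_right, not_disjoint_iff_nonempty_inter]
    exact Nonempty.mono (inter_subset_inter_right D (closedBallOfCode_baseCode_subset σ))
  obtain ⟨f, hf, hf_true, hf_false⟩ := exists_computable_separation hmeets hmisses hcases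
  have mem_of_meets : ∀ σ p, p ∈ D → p ∈ closedBallOfCode (baseCode (2 / 3) σ) → f σ = true :=
    fun σ p hpD hpσ => by
      rw [← Bool.not_eq_false]
      exact fun hfσ => disjoint_left.1 (hf_false σ hfσ) hpD hpσ
  refine ⟨{σ | f σ = true}, isTreeOfStrings_of_append_singleton fun σ b hσ => ?_, fun σ hσ => ?_,
    infinite_of_forall_exists_length_eq fun n => ?_, ComputablePred.computable_iff.2 ⟨f, hf, rfl⟩⟩
  · obtain ⟨p, hpD, hpσ⟩ := hf_true _ hσ
    exact mem_of_meets σ p hpD (ballOfCode_baseCode_append_singleton_subset σ b hpσ)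
  · obtain ⟨p, hpD, hpσ⟩ := hf_true _ hσ
    exact mem_of_mem_psiSet_of_mem_ballOfCode_baseCode hT (hsub hpD) hpσ
  · obtain ⟨σ, hlen, hqσ⟩ := exists_mem_closedBallOfCode_baseCode hT (hsub hq) hq0 n
    exact ⟨σ, mem_of_meets σ q hq hqσ, hlen⟩

theorem computable_dendrite_in_tree_immune_psiSet_misses_base_general
    {T : Set (List Bool)} (hT : IsTreeOfStrings T)
    (him : ∀ S : Set (List Bool), IsTreeOfStrings S → S ⊆ T → S.Infinite →
      ¬ ComputablePred (fun σ => σ ∈ S))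
    {D : Set (ℝ × ℝ)} (hsub : D ⊆ PsiSet T) (hcomp : IsComputableClosed D) :
    D ∩ {p | p.2 = 0} = ∅ := by
  refine eq_empty_of_forall_notMem fun q ⟨hq, hq0⟩ => ?_
  obtain ⟨S, hS, hST, hinf, hSc⟩ := exists_infinite_computable_subtree hT hsub hcomp hq hq0
  exact him S hS hST hinf hSc

theorem computable_dendrite_in_tree_immune_psiSet_misses_base
    (P : Set (ℕ → Bool)) (hne : P.Nonempty) (hcl : IsClosed P)
    (hpi : IsPi01Cantor P) (him : TreeImmune P)
    (D : Set (ℝ × ℝ)) (hsub : D ⊆ PsiSet (treeOfClosed P))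
    (hcomp : IsComputableClosed D) (hden : IsDendrite D) :
    D ∩ (Set.Icc (0:ℝ) 1 ×ˢ ({0} : Set ℝ)) = ∅ :=
  subset_eq_empty (inter_subset_inter_right D fun _ hp => hp.2)
    (computable_dendrite_in_tree_immune_psiSet_misses_base_general
      (isTreeOfStrings_treeOfClosed P) him hsub hcomp)
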